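/- arXiv:2209.14283 — 3 statements merged into one kernel-verified Lean document; each statement's English description precedes it below -/
import Mathlib

section
/- (Lemma 1, principle P1.) Let G be a directed acyclic graph on V = 𝐗 ∪ 𝐘, unidirectional from 𝐗 to 𝐘, and let the joint distribution of random variables (Z_v)_{v ∈ V} be Markov and faithful to G. Then there is no subset S ⊆ 𝐘 and no pair of distinct vertices Yk, Yl ∈ 𝐘 \ S such that Z_{Yk} and Z_{Yl} are conditionally independent given σ((Z_s)_{s ∈ S}) but conditionally dependent given σ((Z_s)_{s ∈ S ∪ 𝐗}). -/
open MeasureTheory ProbabilityTheory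

namespace VecCI

variable {V : Type*}

/-- Undirected adjacency of the edge relation `E`. -/
def Adj (E : V → V → Prop) (u v : V) : Prop := E u v ∨ E v u

/-- `p` is a path from `a` to `b`: a list of pairwise distinct vertices, starting at `a`,
ending at `b`, with at least two vertices, consecutive vertices being adjacent. -/
def IsPath (E : V → V → Prop) (p : List V) (a b : V) : Prop :=
  p.Nodup ∧ 2 ≤ p.length ∧ p.head? = some a ∧ p.getLast? = some b ∧ p.Chain' (Adj E)

/-- Index `i` is an interior position of the path `p`. -/
def Interior (p : List V) (i : ℕ) : Prop := 0 < i ∧ i + 1 < p.length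

/-- The vertex at interior position `i` of `p` is a collider: both adjacent edges point into it. -/
def ColliderAt (E : V → V → Prop) (p : List V) (i : ℕ) : Prop :=
  Interior p i ∧
    ∃ u v w, p[i - 1]? = some u ∧ p[i]? = some v ∧ p[i + 1]? = some w ∧ E u v ∧ E w v

/-- The vertex at interior position `i` of `p` is a non-collider. -/
def NonColliderAt (E : V → V → Prop) (p : List V) (i : ℕ) : Prop :=
  Interior p i ∧ ¬ ColliderAt E p i

/-- `d` is a descendant of `c`: `d = c` or there is a directed path from `c` to `d`. -/
def Descendant (E : V → V → Prop) (c d : V) : Prop := Relation.ReflTransGen E c d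

/-- A set `S` blocks a path `p` if some interior non-collider of `p` lies in `S`, or some
collider of `p` has no descendant in `S`. -/
def Blocked (E : V → V → Prop) (S : Set V) (p : List V) : Prop :=
  (∃ i v, NonColliderAt E p i ∧ p[i]? = some v ∧ v ∈ S) ∨
  (∃ i v, ColliderAt E p i ∧ p[i]? = some v ∧ ∀ d, Descendant E v d → d ∉ S)

/-- `S` d-separates `a` and `b`: every path between them is blocked by `S`. -/
def DSep (E : V → V → Prop) (S : Set V) (a b : V) : Prop :=
  ∀ p : List V, IsPath E p a b → Blocked E S p

/-- `E` admits no directed cycle. -/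
def Acyclic (E : V → V → Prop) : Prop := ∀ v, ¬ Relation.TransGen E v v

/-- `E` has no edge from `Ys` to `Xs`. -/
def Unidirectional (E : V → V → Prop) (Xs Ys : Set V) : Prop :=
  ∀ x ∈ Xs, ∀ y ∈ Ys, ¬ E y x


/-- The σ-algebra generated by the family of random variables `(Z s)_{s ∈ S}`. -/
def sigmaOf {Ω : Type*} (Z : V → Ω → ℝ) (S : Set V) : MeasurableSpace Ω :=
  ⨆ s ∈ S, MeasurableSpace.comap (Z s) inferInstance

/-- `Z a` and `Z b` are conditionally independent given the σ-algebra generated by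
`(Z s)_{s ∈ S}` (for `S = ∅` this is conditioning on the trivial σ-algebra, i.e.
unconditional independence). -/
def CondIndepGiven {Ω : Type*} [mΩ : MeasurableSpace Ω] [StandardBorelSpace Ω]
    (μ : Measure Ω) [IsFiniteMeasure μ] (Z : V → Ω → ℝ) (hZ : ∀ v, Measurable (Z v))
    (S : Set V) (a b : V) : Prop :=
  CondIndepFun (sigmaOf Z S) (iSup₂_le fun s _ => measurable_iff_comap_le.mp (hZ s))
    (Z a) (Z b) μ

/-- The joint distribution of `(Z v)_{v ∈ V}` is Markov and faithful to the graph `E`: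
for all distinct `a`, `b` and every `S ⊆ V \ {a, b}`, `S` d-separates `a` and `b` in `E`
iff `Z a` and `Z b` are conditionally independent given `σ((Z s)_{s ∈ S})`. -/
def MarkovFaithful {Ω : Type*} [mΩ : MeasurableSpace Ω] [StandardBorelSpace Ω]
    (E : V → V → Prop) (μ : Measure Ω) [IsFiniteMeasure μ]
    (Z : V → Ω → ℝ) (hZ : ∀ v, Measurable (Z v)) : Prop :=
  ∀ a b : V, a ≠ b → ∀ S : Set V, a ∉ S → b ∉ S →
    (DSep E S a b ↔ CondIndepGiven μ Z hZ S a b)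

/-!
Let a path between two effects meet the cause group `Xs`, and consider its first vertex in `Xs`. The
preceding vertex lies in `Ys`, so the edge between them does not point into `Xs`: the vertex reached
is a non-collider, and conditioning on `Xs` blocks the path. If a path avoids `Xs`, its vertices
have no descendants in `Xs`, so adding `Xs` to the conditioning set does not open any collider.
-/

section Graph

variable {E : V → V → Prop} {A S : Set V} {p : List V} {a b c d v : V}

theorem Unidirectional.notMem_of_descendant (hA : Unidirectional E A Aᶜ)
    (hcd : Descendant E c d) (hc : c ∉ A) : d ∉ A := by
  induction hcd with
  | refl => exact hc
  | tail _ hEdge ih => exact fun hd => hA _ hd _ ih hEdge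

theorem Unidirectional.exists_nonColliderAt_mem (hA : Unidirectional E A Aᶜ)
    (hp : IsPath E p a b) (ha : a ∉ A) (hb : b ∉ A) (hvp : v ∈ p) (hvA : v ∈ A) :
    ∃ i w, NonColliderAt E p i ∧ p[i]? = some w ∧ w ∈ A := by
  classical
  obtain ⟨-, -, hhead, hlast, -⟩ := hp
  have hmeets : ∃ i w, p[i]? = some w ∧ w ∈ A :=
    (List.mem_iff_getElem?.1 hvp).imp fun _ hi => ⟨v, hi, hvA⟩
  obtain ⟨w, hw, hwA⟩ := Nat.find_spec hmeets
  have hfirst : ∀ j < Nat.find hmeets, ∀ u, p[j]? = some u → u ∉ A :=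
    fun j hj u hu huA => Nat.find_min hmeets hj ⟨u, hu, huA⟩
  generalize Nat.find hmeets = i at hw hfirst
  have hi : i < p.length := (List.getElem?_eq_some_iff.1 hw).1
  have hi_ne_zero : i ≠ 0 := by
    rintro rfl
    rw [List.head?_eq_getElem?, hw, Option.some_inj] at hhead
    exact ha (hhead ▸ hwA)
  have hi_ne_last : i ≠ p.length - 1 := by
    rintro rfl
    rw [List.getLast?_eq_getElem?, hw, Option.some_inj] at hlast
    exact hb (hlast ▸ hwA)
  refine ⟨i, w, ⟨⟨by lia, by lia⟩, ?_⟩, hw, hwA⟩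
  rintro ⟨-, u, w', -, hu, hw', -, hEdge, -⟩
  obtain rfl : w = w' := Option.some_inj.1 (hw.symm.trans hw')
  exact hA w hwA u (hfirst (i - 1) (by lia) u hu) hEdge

theorem Blocked.union_of_unidirectional (hS : Blocked E S p) (hA : Unidirectional E A Aᶜ)
    (hp : IsPath E p a b) (ha : a ∉ A) (hb : b ∉ A) : Blocked E (S ∪ A) p := by
  by_cases hmeets : ∃ v ∈ p, v ∈ A
  · obtain ⟨v, hvp, hvA⟩ := hmeets
    obtain ⟨i, w, hi, hw, hwA⟩ := hA.exists_nonColliderAt_mem hp ha hb hvp hvA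
    exact .inl ⟨i, w, hi, hw, .inr hwA⟩
  · rcases hS with ⟨i, v, hi, hv, hvS⟩ | ⟨i, v, hi, hv, hdesc⟩
    · exact .inl ⟨i, v, hi, hv, .inl hvS⟩
    · have hvA : v ∉ A := fun hvA => hmeets ⟨v, List.mem_of_getElem? hv, hvA⟩
      exact .inr ⟨i, v, hi, hv, fun d hd =>
        not_or.2 ⟨hdesc d hd, hA.notMem_of_descendant hd hvA⟩⟩

theorem DSep.union_of_unidirectional (hS : DSep E S a b) (hA : Unidirectional E A Aᶜ)
    (ha : a ∉ A) (hb : b ∉ A) : DSep E (S ∪ A) a b :=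
  fun p hp => (hS p hp).union_of_unidirectional hA hp ha hb

end Graph

theorem stmt_2_general {E : V → V → Prop} {Xs S : Set V} {a b : V}
    (huni : Unidirectional E Xs Xsᶜ)
    {Ω : Type*} [MeasurableSpace Ω] [StandardBorelSpace Ω] {μ : Measure Ω} [IsFiniteMeasure μ]
    {Z : V → Ω → ℝ} {hZ : ∀ v, Measurable (Z v)} (hMF : MarkovFaithful E μ Z hZ)
    (ha : a ∉ S ∪ Xs) (hb : b ∉ S ∪ Xs) (hab : a ≠ b) (hS : CondIndepGiven μ Z hZ S a b) :
    CondIndepGiven μ Z hZ (S ∪ Xs) a b := by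
  have hsep : DSep E S a b :=
    (hMF a b hab S (fun h => ha (.inl h)) fun h => hb (.inl h)).2 hS
  exact (hMF a b hab (S ∪ Xs) ha hb).1 <|
    hsep.union_of_unidirectional huni (fun h => ha (.inr h)) fun h => hb (.inr h)

/-- Lemma 1, principle P1: under Markov + faithfulness to a DAG
unidirectional from `Xs` to `Ys`, conditioning on the cause group `Xs` cannot create
a new conditional dependence within the effect group `Ys`. -/
theorem stmt_2 {V : Type*} [Fintype V] (E : V → V → Prop) (Xs Ys : Set V)
    (hcover : Xs ∪ Ys = Set.univ) (hdisj : Disjoint Xs Ys)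
    (hXne : Xs.Nonempty) (hYne : Ys.Nonempty)
    (hirr : Irreflexive E) (hacyc : Acyclic E)
    (huni : Unidirectional E Xs Ys)
    {Ω : Type*} [mΩ : MeasurableSpace Ω] [StandardBorelSpace Ω]
    (μ : Measure Ω) [IsProbabilityMeasure μ]
    (Z : V → Ω → ℝ) (hZ : ∀ v, Measurable (Z v))
    (hMF : MarkovFaithful E μ Z hZ) :
    ¬ ∃ (S : Set V) (Yk Yl : V), S ⊆ Ys ∧ Yk ∈ Ys \ S ∧ Yl ∈ Ys \ S ∧ Yk ≠ Yl ∧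
      CondIndepGiven μ Z hZ S Yk Yl ∧ ¬ CondIndepGiven μ Z hZ (S ∪ Xs) Yk Yl := by
  obtain rfl : Ys = Xsᶜ := (IsCompl.of_eq hdisj.eq_bot hcover).symm.eq_compl
  rintro ⟨S, Yk, Yl, -, ⟨hk, hkS⟩, ⟨hl, hlS⟩, hkl, hind, hdep⟩
  exact hdep (stmt_2_general huni hMF (not_or.2 ⟨hkS, hk⟩) (not_or.2 ⟨hlS, hl⟩) hkl hind)

end VecCI
end

section
/- (Theorem 1, main identifiability result.) Let G be a directed acyclic graph on V = 𝐗 ∪ 𝐘, unidirectional from 𝐗 to 𝐘, and let the joint distribution of random variables (Z_v)_{v ∈ V} be Markov and faithful to G. Assume that at least one of the following holds: (C1) there exist distinct Xi, Xj ∈ 𝐗 and S ⊆ 𝐗 \ {Xi, Xj} such that Z_{Xi} and Z_{Xj} are conditionally independent given σ((Z_s)_{s ∈ S}) but conditionally dependent given σ((Z_s)_{s ∈ S ∪ 𝐘}); or (C2) there exist distinct Yk, Yl ∈ 𝐘 and S ⊆ 𝐘 \ {Yk, Yl} such that Z_{Yk} and Z_{Yl} are conditionally dependent given σ((Z_s)_{s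 ∈ S}) but conditionally independent given σ((Z_s)_{s ∈ S ∪ 𝐗}). Then there exists no directed acyclic graph G' on V containing no edge (x, y) with x ∈ 𝐗 and y ∈ 𝐘 to which the joint distribution of (Z_v)_{v ∈ V} is Markov and faithful; hence the causal direction 𝐗 → 𝐘 is identifiable from the observational distribution. -/
open MeasureTheory ProbabilityTheory

namespace VecCI

variable {V : Type*}

/-!
Fix a set `A` of vertices that no edge leaves, so that every descendant of a vertex of `A` is in
`A`. A path with endpoints in `A` that visits `Aᶜ` enters it against an edge, at a non-collider,
and so is blocked by any set containing `Aᶜ`; along a path inside `A`, adding `Aᶜ` to the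
conditioning set activates no collider. Conversely, a path with endpoints outside `A` that visits
`A` enters and leaves `A` along edges pointing into `A`, so it has a collider in `A`, none of whose
descendants lies outside `A`; along a path avoiding `A`, conditioning on `A` closes no non-collider.
Consequently, if no edge goes from `Xs` to `Ys`, then conditioning on `Ys` preserves d-separation
inside `Xs`, and conditioning on `Xs` creates none inside `Ys`. (C1) violates the former and (C2)
the latter.
-/

section Paths

variable {E : V → V → Prop} {A : Set V} {p : List V} {a b c d v : V} {i : ℕ}

lemma Unidirectional.mem_of_descendant (hA : Unidirectional E Aᶜ A) (hc : c ∈ A)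
    (hd : Descendant E c d) : d ∈ A := by
  induction hd with
  | refl => exact hc
  | tail _ huv hu => exact not_not.mp fun hv => hA _ hv _ hu huv

lemma colliderAt_succ_iff (hi : i + 2 < p.length) :
    ColliderAt E p (i + 1) ↔ E p[i] p[i + 1] ∧ E p[i + 2] p[i + 1] := by
  simp [ColliderAt, Interior, hi, show i < p.length by omega, show i + 1 < p.length by omega]

lemma IsPath.getElem_zero (hp : IsPath E p a b) (h : 0 < p.length) : p[0] = a := by
  simpa [List.head?_eq_getElem?, h] using hp.2.2.1

lemma IsPath.getElem_of_last (hp : IsPath E p a b) (h : i < p.length)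
    (hlast : p.length ≤ i + 1) : p[i] = b := by
  obtain rfl : i = p.length - 1 := by omega
  simpa [List.getLast?_eq_getElem?, h] using hp.2.2.2.1

lemma IsPath.adj_getElem (hp : IsPath E p a b) (hi : i + 1 < p.length) :
    Adj E p[i] p[i + 1] :=
  List.isChain_iff_getElem.mp hp.2.2.2.2 i hi

lemma IsPath.exists_getElem_notMem_getElem_succ_mem (hp : IsPath E p a b) (ha : a ∉ A)
    (hv : v ∈ p) (hvA : v ∈ A) :
    ∃ (i : ℕ) (_ : i + 1 < p.length), p[i] ∉ A ∧ p[i + 1] ∈ A := by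
  by_contra! hstay
  have hout : ∀ i (hi : i < p.length), p[i] ∉ A := by
    intro i
    induction i with
    | zero => exact fun hi => hp.getElem_zero hi ▸ ha
    | succ i ih => exact fun hi => hstay i hi (ih (by omega))
  obtain ⟨i, hi, rfl⟩ := List.mem_iff_getElem.mp hv
  exact hout i hi hvA

lemma IsPath.exists_nonColliderAt_of_notMem (hA : Unidirectional E Aᶜ A) (hp : IsPath E p a b)
    (ha : a ∈ A) (hb : b ∈ A) (hv : v ∈ p) (hvA : v ∉ A) :
    ∃ i w, NonColliderAt E p i ∧ p[i]? = some w ∧ w ∉ A := by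
  obtain ⟨i, hi, hiA, hiA'⟩ :=
    hp.exists_getElem_notMem_getElem_succ_mem (A := Aᶜ) (not_not.mpr ha) hv hvA
  have hinterior : i + 2 < p.length := by
    by_contra! hlast
    exact hiA' (hp.getElem_of_last hi hlast ▸ hb)
  refine ⟨i + 1, p[i + 1], ⟨⟨i.succ_pos, hinterior⟩, fun hcol => ?_⟩,
    List.getElem?_eq_getElem hi, hiA'⟩
  exact hA _ hiA' _ (not_not.mp hiA) ((colliderAt_succ_iff hinterior).mp hcol).1

lemma IsPath.exists_colliderAt_of_mem (hA : Unidirectional E Aᶜ A) (hp : IsPath E p a b)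
    (ha : a ∉ A) (hb : b ∉ A) (hv : v ∈ p) (hvA : v ∈ A) :
    ∃ i w, ColliderAt E p i ∧ p[i]? = some w ∧ w ∈ A := by
  by_contra! hno
  obtain ⟨i, hi, hiA, hiA'⟩ := hp.exists_getElem_notMem_getElem_succ_mem ha hv hvA
  -- Without a collider in `A`, the edges after the entry into `A` all point forward.
  have hforward : ∀ j, i ≤ j → ∃ hj : j + 1 < p.length, p[j + 1] ∈ A ∧ E p[j] p[j + 1] := by
    refine Nat.le_induction
      ⟨hi, hiA', (hp.adj_getElem hi).resolve_right (hA _ hiA _ hiA')⟩ ?_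
    rintro j - ⟨hj, hjA, hedge⟩
    have hj' : j + 2 < p.length := by
      by_contra! hlast
      exact hb (hp.getElem_of_last hj hlast ▸ hjA)
    have hedge' : E p[j + 1] p[j + 2] := (hp.adj_getElem hj').resolve_right fun hback =>
      hno (j + 1) _ ((colliderAt_succ_iff hj').mpr ⟨hedge, hback⟩)
        (List.getElem?_eq_getElem hj) hjA
    exact ⟨hj', hA.mem_of_descendant hjA (.single hedge'), hedge'⟩
  obtain ⟨hlt, -⟩ := hforward p.length (by omega)
  omega

end Paths

section Separation

variable {E : V → V → Prop} {A S : Set V} {p : List V} {a b : V}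

lemma Blocked.union_compl (hA : Unidirectional E Aᶜ A) (hpA : ∀ v ∈ p, v ∈ A)
    (hS : Blocked E S p) : Blocked E (S ∪ Aᶜ) p := by
  rcases hS with ⟨i, v, hnon, hv, hvS⟩ | ⟨i, v, hcol, hv, hdesc⟩
  · exact .inl ⟨i, v, hnon, hv, .inl hvS⟩
  · refine .inr ⟨i, v, hcol, hv, fun d hd => ?_⟩
    rintro (hdS | hdA)
    · exact hdesc d hd hdS
    · exact hdA (hA.mem_of_descendant (hpA v (List.mem_of_getElem? hv)) hd)

lemma Blocked.of_union (hpA : ∀ v ∈ p, v ∉ A) (hSA : Blocked E (S ∪ A) p) : Blocked E S p := by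
  rcases hSA with ⟨i, v, hnon, hv, hvSA⟩ | ⟨i, v, hcol, hv, hdesc⟩
  · exact .inl ⟨i, v, hnon, hv, hvSA.resolve_right (hpA v (List.mem_of_getElem? hv))⟩
  · exact .inr ⟨i, v, hcol, hv, fun d hd hdS => hdesc d hd (.inl hdS)⟩

lemma DSep.union_compl (hA : Unidirectional E Aᶜ A) (ha : a ∈ A) (hb : b ∈ A)
    (hS : DSep E S a b) : DSep E (S ∪ Aᶜ) a b := by
  intro p hp
  by_cases hpA : ∀ v ∈ p, v ∈ A
  · exact (hS p hp).union_compl hA hpA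
  · push Not at hpA
    obtain ⟨v, hv, hvA⟩ := hpA
    obtain ⟨i, w, hnon, hw, hwA⟩ := hp.exists_nonColliderAt_of_notMem hA ha hb hv hvA
    exact .inl ⟨i, w, hnon, hw, .inr hwA⟩

lemma DSep.of_union (hA : Unidirectional E Aᶜ A) (hS : Disjoint S A) (ha : a ∉ A) (hb : b ∉ A)
    (hSA : DSep E (S ∪ A) a b) : DSep E S a b := by
  intro p hp
  by_cases hpA : ∀ v ∈ p, v ∉ A
  · exact (hSA p hp).of_union hpA
  · push Not at hpA
    obtain ⟨v, hv, hvA⟩ := hpA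
    obtain ⟨i, w, hcol, hw, hwA⟩ := hp.exists_colliderAt_of_mem hA ha hb hv hvA
    exact .inr ⟨i, w, hcol, hw, fun d hd hdS =>
      Set.disjoint_left.mp hS hdS (hA.mem_of_descendant hwA hd)⟩

end Separation

section Faithful

variable {E : V → V → Prop} {A S : Set V} {a b : V} {Ω : Type*} [MeasurableSpace Ω]
  [StandardBorelSpace Ω] {μ : Measure Ω} [IsFiniteMeasure μ] {Z : V → Ω → ℝ}
  {hZ : ∀ v, Measurable (Z v)}

lemma MarkovFaithful.condIndepGiven_union_compl (hMF : MarkovFaithful E μ Z hZ)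
    (hA : Unidirectional E Aᶜ A) (ha : a ∈ A) (hb : b ∈ A) (hab : a ≠ b)
    (haS : a ∉ S) (hbS : b ∉ S) (hS : CondIndepGiven μ Z hZ S a b) :
    CondIndepGiven μ Z hZ (S ∪ Aᶜ) a b :=
  (hMF a b hab (S ∪ Aᶜ) (by simp [haS, ha]) (by simp [hbS, hb])).mp
    (((hMF a b hab S haS hbS).mpr hS).union_compl hA ha hb)

lemma MarkovFaithful.condIndepGiven_of_union (hMF : MarkovFaithful E μ Z hZ)
    (hA : Unidirectional E Aᶜ A) (hSA : Disjoint S A) (ha : a ∉ A) (hb : b ∉ A) (hab : a ≠ b)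
    (haS : a ∉ S) (hbS : b ∉ S) (hS : CondIndepGiven μ Z hZ (S ∪ A) a b) :
    CondIndepGiven μ Z hZ S a b :=
  (hMF a b hab S haS hbS).mp <|
    ((hMF a b hab (S ∪ A) (by simp [haS, ha]) (by simp [hbS, hb])).mpr hS).of_union hA hSA ha hb

end Faithful

theorem stmt_8_general {V : Type*} (Xs Ys : Set V)
    (hcover : Xs ∪ Ys = Set.univ) (hdisj : Disjoint Xs Ys)
    {Ω : Type*} [MeasurableSpace Ω] [StandardBorelSpace Ω]
    (μ : Measure Ω) [IsFiniteMeasure μ]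
    (Z : V → Ω → ℝ) (hZ : ∀ v, Measurable (Z v))
    (hC : (∃ Xi Xj : V, Xi ∈ Xs ∧ Xj ∈ Xs ∧ Xi ≠ Xj ∧ ∃ S ⊆ Xs \ {Xi, Xj},
            CondIndepGiven μ Z hZ S Xi Xj ∧ ¬ CondIndepGiven μ Z hZ (S ∪ Ys) Xi Xj) ∨
          (∃ Yk Yl : V, Yk ∈ Ys ∧ Yl ∈ Ys ∧ Yk ≠ Yl ∧ ∃ S ⊆ Ys \ {Yk, Yl},
            ¬ CondIndepGiven μ Z hZ S Yk Yl ∧ CondIndepGiven μ Z hZ (S ∪ Xs) Yk Yl)) :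
    ¬ ∃ E' : V → V → Prop, (∀ x ∈ Xs, ∀ y ∈ Ys, ¬ E' x y) ∧ MarkovFaithful E' μ Z hZ := by
  rintro ⟨E', hXY, hMF⟩
  obtain rfl : Xsᶜ = Ys := IsCompl.compl_eq ⟨hdisj, codisjoint_iff.mpr hcover⟩
  have hX : Unidirectional E' Xsᶜ Xs := fun y hy x hx => hXY x hx y hy
  rcases hC with ⟨a, b, ha, hb, hab, S, hS, hindep, hdep⟩ |
      ⟨a, b, ha, hb, hab, S, hS, hdep, hindep⟩
  all_goals
    have haS : a ∉ S := fun h => (hS h).2 (by simp)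
    have hbS : b ∉ S := fun h => (hS h).2 (by simp)
  · exact hdep (hMF.condIndepGiven_union_compl hX ha hb hab haS hbS hindep)
  · have hSX : Disjoint S Xs := Set.subset_compl_iff_disjoint_right.mp fun s hs => (hS hs).1
    exact hdep (hMF.condIndepGiven_of_union hX hSX ha hb hab haS hbS hindep)

/-- Theorem 1, main identifiability result: if at least one of Conditions
(C1) or (C2) holds, then the observational distribution is Markov and faithful to no DAG
that is unidirectional from `Ys` to `Xs`; hence the causal direction `Xs → Ys` is
identifiable. -/
theorem stmt_8 {V : Type*} [Fintype V] (E : V → V → Prop) (Xs Ys : Set V)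
    (hcover : Xs ∪ Ys = Set.univ) (hdisj : Disjoint Xs Ys)
    (hXne : Xs.Nonempty) (hYne : Ys.Nonempty)
    (hirr : Irreflexive E) (hacyc : Acyclic E)
    (huni : Unidirectional E Xs Ys)
    {Ω : Type*} [mΩ : MeasurableSpace Ω] [StandardBorelSpace Ω]
    (μ : Measure Ω) [IsProbabilityMeasure μ]
    (Z : V → Ω → ℝ) (hZ : ∀ v, Measurable (Z v))
    (hMF : MarkovFaithful E μ Z hZ)
    (hC : (∃ Xi Xj : V, Xi ∈ Xs ∧ Xj ∈ Xs ∧ Xi ≠ Xj ∧ ∃ S ⊆ Xs \ {Xi, Xj},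
            CondIndepGiven μ Z hZ S Xi Xj ∧ ¬ CondIndepGiven μ Z hZ (S ∪ Ys) Xi Xj) ∨
          (∃ Yk Yl : V, Yk ∈ Ys ∧ Yl ∈ Ys ∧ Yk ≠ Yl ∧ ∃ S ⊆ Ys \ {Yk, Yl},
            ¬ CondIndepGiven μ Z hZ S Yk Yl ∧ CondIndepGiven μ Z hZ (S ∪ Xs) Yk Yl)) :
    ¬ ∃ E' : V → V → Prop, Irreflexive E' ∧ Acyclic E' ∧
      (∀ x ∈ Xs, ∀ y ∈ Ys, ¬ E' x y) ∧ MarkovFaithful E' μ Z hZ := by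
  rintro ⟨E', -, -, hXY, hMF'⟩
  exact stmt_8_general Xs Ys hcover hdisj μ Z hZ hC ⟨E', hXY, hMF'⟩

end VecCI
end

section
/- (Common-confounder sufficient condition for (C2).) Let G be a directed acyclic graph on V = 𝐗 ∪ 𝐘, unidirectional from 𝐗 to 𝐘. Suppose there exist distinct Yk, Yl ∈ 𝐘, a set S ⊆ 𝐘 \ {Yk, Yl} that d-separates Yk and Yl in the induced subgraph of G on 𝐘, and a common confounder Xi ∈ 𝐗 with edges (Xi, Yk) ∈ E and (Xi, Yl) ∈ E. Then Condition (C2) holds in its graphical form: S does not d-separate Yk and Yl in G, while S ∪ 𝐗 d-separates Yk and Yl in G. -/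
open MeasureTheory ProbabilityTheory

namespace VecCI

variable {V : Type*}

/-- The induced subgraph of `E` on the vertex set `W`: only edges of `E` between
vertices of `W`. -/
def Restrict (E : V → V → Prop) (W : Set V) (u v : V) : Prop :=
  E u v ∧ u ∈ W ∧ v ∈ W

/-!
The fork `Yk ← Xi → Yl` is open given `S`, since its only interior vertex is a non-collider outside
`S`. For the second half, no edge leaves `Ys`. A path between two vertices of `Ys` that leaves `Ys`
therefore does so backwards along an edge, so the first vertex outside `Ys` is a non-collider, and
conditioning on the complement of `Ys` blocks the path. A path staying inside `Ys` is a path of the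
induced subgraph with the same colliders and the same descendants, so it remains blocked.
-/

section

variable {E : V → V → Prop} {S W : Set V} {p : List V} {a b u v x : V}

theorem not_dSep_of_common_parent (hab : a ≠ b) (hxa : E x a) (hxb : E x b)
    (hax : ¬ E a x) (hbx : ¬ E b x) (hxS : x ∉ S) : ¬ DSep E S a b := by
  have a_ne_x : a ≠ x := by rintro rfl; exact hax hxa
  have x_ne_b : x ≠ b := by rintro rfl; exact hbx hxb
  have isPath_fork : IsPath E [a, x, b] a b :=
    ⟨by simp [hab, a_ne_x, x_ne_b], by simp, rfl, rfl,
      .cons_cons (.inr hxa) (.cons_cons (.inl hxb) (.singleton b))⟩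
  have eq_one_of_interior {i : ℕ} (hi : Interior [a, x, b] i) : i = 1 := by
    simp only [Interior, List.length_cons, List.length_nil] at hi
    omega
  intro hsep
  rcases hsep _ isPath_fork with ⟨i, v, hi, hv, hvS⟩ | ⟨i, v, ⟨hi, u, y, w, hu, hy, -, huy, -⟩, -⟩
  · obtain rfl := eq_one_of_interior hi.1
    obtain rfl : x = v := by simpa using hv
    exact hxS hvS
  · obtain rfl := eq_one_of_interior hi
    obtain rfl : a = u := by simpa using hu
    obtain rfl : x = y := by simpa using hy
    exact hax huy

theorem Unidirectional.mem_of_edge (h : Unidirectional E Wᶜ W) (hu : u ∈ W) (huv : E u v) :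
    v ∈ W :=
  by_contra fun hv => h v hv u hu huv

theorem Descendant.mem (huni : Unidirectional E Wᶜ W) (hu : u ∈ W) (h : Descendant E u v) :
    v ∈ W := by
  induction h with
  | refl => exact hu
  | tail _ hbc hb => exact huni.mem_of_edge hb hbc

theorem Descendant.restrict (huni : Unidirectional E Wᶜ W) (hu : u ∈ W) (h : Descendant E u v) :
    Descendant (Restrict E W) u v := by
  induction h with
  | refl => exact .refl
  | tail hab hbc ih =>
    have hb := Descendant.mem huni hu hab
    exact ih.tail ⟨hbc, hb, huni.mem_of_edge hb hbc⟩

theorem IsPath.restrict (hp : IsPath E p a b) (hpW : ∀ v ∈ p, v ∈ W) :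
    IsPath (Restrict E W) p a b := by
  obtain ⟨hnodup, hlength, hhead, hlast, hchain⟩ := hp
  refine ⟨hnodup, hlength, hhead, hlast, hchain.imp_of_mem_imp fun u v hu hv huv => ?_⟩
  exact huv.imp (⟨·, hpW u hu, hpW v hv⟩) (⟨·, hpW v hv, hpW u hu⟩)

theorem colliderAt_restrict_iff (hpW : ∀ v ∈ p, v ∈ W) {i : ℕ} :
    ColliderAt (Restrict E W) p i ↔ ColliderAt E p i := by
  constructor
  · rintro ⟨hi, u, v, w, hu, hv, hw, huv, hwv⟩
    exact ⟨hi, u, v, w, hu, hv, hw, huv.1, hwv.1⟩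
  · rintro ⟨hi, u, v, w, hu, hv, hw, huv, hwv⟩
    have huW := hpW u (List.mem_of_getElem? hu)
    have hvW := hpW v (List.mem_of_getElem? hv)
    have hwW := hpW w (List.mem_of_getElem? hw)
    exact ⟨hi, u, v, w, hu, hv, hw, ⟨huv, huW, hvW⟩, ⟨hwv, hwW, hvW⟩⟩

theorem Blocked.union_compl_of_restrict (huni : Unidirectional E Wᶜ W) (hpW : ∀ v ∈ p, v ∈ W)
    (h : Blocked (Restrict E W) S p) : Blocked E (S ∪ Wᶜ) p := by
  rcases h with ⟨i, v, ⟨hi, hnot⟩, hv, hvS⟩ | ⟨i, v, hcol, hv, hdesc⟩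
  · exact .inl ⟨i, v, ⟨hi, mt (colliderAt_restrict_iff hpW).mpr hnot⟩, hv, .inl hvS⟩
  · have hvW := hpW v (List.mem_of_getElem? hv)
    refine .inr ⟨i, v, (colliderAt_restrict_iff hpW).mp hcol, hv, fun d hvd => ?_⟩
    rintro (hdS | hdW)
    · exact hdesc d (hvd.restrict huni hvW) hdS
    · exact hdW (hvd.mem huni hvW)

theorem exists_getElem_mem_getElem_succ_notMem (hhead : p.head? = some a) (ha : a ∈ W)
    (hpW : ¬ ∀ v ∈ p, v ∈ W) : ∃ i, ∃ h : i + 1 < p.length, p[i] ∈ W ∧ p[i + 1] ∉ W := by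
  by_contra! hstay
  have hchain : p.IsChain fun u v => u ∈ W → v ∈ W := List.isChain_iff_getElem.mpr hstay
  refine hpW (hchain.induction (· ∈ W) _ (fun _ _ => id) fun hne => ?_)
  rw [List.head?_eq_some_head hne, Option.some_inj] at hhead
  rwa [hhead]

theorem IsPath.exists_nonColliderAt_notMem (huni : Unidirectional E Wᶜ W) (hp : IsPath E p a b)
    (ha : a ∈ W) (hb : b ∈ W) (hpW : ¬ ∀ v ∈ p, v ∈ W) :
    ∃ i v, NonColliderAt E p i ∧ p[i]? = some v ∧ v ∉ W := by
  obtain ⟨-, -, hhead, hlast, -⟩ := hp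
  obtain ⟨i, hi, hiW, hsuccW⟩ := exists_getElem_mem_getElem_succ_notMem hhead ha hpW
  have hinterior : Interior p (i + 1) := by
    refine ⟨i.succ_pos, lt_of_le_of_ne hi fun hend => hsuccW ?_⟩
    rw [List.getLast?_eq_getElem?, ← hend, Nat.add_sub_cancel, List.getElem?_eq_getElem hi,
      Option.some_inj] at hlast
    rwa [hlast]
  refine ⟨i + 1, p[i + 1], ⟨hinterior, ?_⟩, List.getElem?_eq_getElem hi, hsuccW⟩
  rintro ⟨-, u, v, w, hu, hv, -, huv, -⟩
  obtain ⟨_, rfl⟩ := List.getElem?_eq_some_iff.mp hu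
  obtain ⟨_, rfl⟩ := List.getElem?_eq_some_iff.mp hv
  exact hsuccW (huni.mem_of_edge hiW huv)

theorem DSep.union_compl_of_restrict (huni : Unidirectional E Wᶜ W) (ha : a ∈ W) (hb : b ∈ W)
    (hsep : DSep (Restrict E W) S a b) : DSep E (S ∪ Wᶜ) a b := by
  intro p hp
  by_cases hpW : ∀ v ∈ p, v ∈ W
  · exact (hsep p (hp.restrict hpW)).union_compl_of_restrict huni hpW
  · obtain ⟨i, v, hi, hv, hvW⟩ := hp.exists_nonColliderAt_notMem huni ha hb hpW
    exact .inl ⟨i, v, hi, hv, .inr hvW⟩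

end

theorem stmt_12_general (E : V → V → Prop) (Xs Ys : Set V) (hcompl : IsCompl Xs Ys)
    (huni : Unidirectional E Xs Ys)
    (Yk Yl : V) (hYk : Yk ∈ Ys) (hYl : Yl ∈ Ys) (hne : Yk ≠ Yl)
    (S : Set V) (hsepY : DSep (Restrict E Ys) S Yk Yl)
    (Xi : V) (hXi : Xi ∈ Xs) (hXiS : Xi ∉ S) (hEk : E Xi Yk) (hEl : E Xi Yl) :
    ¬ DSep E S Yk Yl ∧ DSep E (S ∪ Xs) Yk Yl := by
  obtain rfl := hcompl.eq_compl
  exact ⟨not_dSep_of_common_parent hne hEk hEl (huni Xi hXi Yk hYk) (huni Xi hXi Yl hYl) hXiS,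
    hsepY.union_compl_of_restrict huni hYk hYl⟩

/-- a common confounder `Yk ← Xi → Yl` together with d-separation of
`Yk, Yl` by `S ⊆ Ys \ {Yk, Yl}` in the induced subgraph on `Ys` yields the graphical
form of Condition (C2). -/
theorem stmt_12 {V : Type*} [Fintype V] (E : V → V → Prop) (Xs Ys : Set V)
    (hcover : Xs ∪ Ys = Set.univ) (hdisj : Disjoint Xs Ys)
    (hXne : Xs.Nonempty) (hYne : Ys.Nonempty)
    (hirr : Irreflexive E) (hacyc : Acyclic E)
    (huni : Unidirectional E Xs Ys)
    (Yk Yl : V) (hYk : Yk ∈ Ys) (hYl : Yl ∈ Ys) (hne : Yk ≠ Yl)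
    (S : Set V) (hS : S ⊆ Ys \ {Yk, Yl})
    (hsepY : DSep (Restrict E Ys) S Yk Yl)
    (Xi : V) (hXi : Xi ∈ Xs) (hEk : E Xi Yk) (hEl : E Xi Yl) :
    ¬ DSep E S Yk Yl ∧ DSep E (S ∪ Xs) Yk Yl := by
  exact stmt_12_general E Xs Ys ⟨hdisj, codisjoint_iff.mpr hcover⟩ huni Yk Yl hYk hYl hne S hsepY
    Xi hXi (fun hXiS => Set.disjoint_left.mp hdisj hXi (hS hXiS).1) hEk hEl

end VecCI
end
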